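/- If k ≤ n, then φ_k : C[Σ_k] → End_C(V^{⊗k}) is injective; combined with the surjectivity of φ_k onto the centralizer, φ_k is then a C-algebra isomorphism from C[Σ_k] onto End_{gl_n}(V^{⊗k}). -/

import Mathlib

open scoped TensorProduct

/-- `V^{⊗k}` for `V = ℂ^n`. -/
abbrev SWTensor (n K : ℕ) : Type := ⨂[ℂ] (_ : Fin K), (Fin n → ℂ)

/-- The operator `D_A = Σ_j id ⊗ ⋯ ⊗ A ⊗ ⋯ ⊗ id` on `V^{⊗k}`. -/
noncomputable def SWD (n K : ℕ) (A : Matrix (Fin n) (Fin n) ℂ) :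
    Module.End ℂ (SWTensor n K) :=
  ∑ j : Fin K, PiTensorProduct.map
    (Function.update (fun _ : Fin K => (LinearMap.id : (Fin n → ℂ) →ₗ[ℂ] (Fin n → ℂ)))
      j A.mulVecLin)

theorem SWD_tprod (n K : ℕ) (A : Matrix (Fin n) (Fin n) ℂ) (v : Fin K → (Fin n → ℂ)) :
    SWD n K A (PiTensorProduct.tprod ℂ v) =
      ∑ j : Fin K, PiTensorProduct.tprod ℂ (Function.update v j (A.mulVec (v j))) := by
  simp only [SWD, LinearMap.sum_apply, PiTensorProduct.map_tprod]
  refine Finset.sum_congr rfl fun j _ => ?_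
  congr 1
  funext i
  by_cases h : i = j
  · subst h; simp
  · simp [Function.update_of_ne h]

theorem SW_cyclic (n K : ℕ) (hKn : K ≤ n) (W : Submodule ℂ (SWTensor n K))
    (hW : ∀ A, ∀ x ∈ W, SWD n K A x ∈ W)
    (hw : PiTensorProduct.tprod ℂ
      (fun j : Fin K => (Pi.single (Fin.castLE hKn j) 1 : Fin n → ℂ)) ∈ W) : W = ⊤ := by
  have key : ∀ S : Finset (Fin K), ∀ v : Fin K → (Fin n → ℂ),
      (∀ i, i ∉ S → v i = Pi.single (Fin.castLE hKn i) 1) → PiTensorProduct.tprod ℂ v ∈ W := by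
    intro S
    induction S using Finset.induction_on with
    | empty =>
      intro v hv
      have : v = fun j : Fin K => (Pi.single (Fin.castLE hKn j) 1 : Fin n → ℂ) :=
        funext fun i => hv i (by simp)
      rw [this]; exact hw
    | insert j S hj ih =>
      intro v hv
      set A : Matrix (Fin n) (Fin n) ℂ :=
        Matrix.vecMulVec (v j) (Pi.single (Fin.castLE hKn j) 1) with hA
      set u : Fin K → (Fin n → ℂ) :=
        Function.update v j (Pi.single (Fin.castLE hKn j) 1) with hu
      have huS : ∀ i, i ∉ S → u i = Pi.single (Fin.castLE hKn i) 1 := by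
        intro i hi
        by_cases h : i = j
        · subst h; simp [hu]
        · rw [hu, Function.update_of_ne h]
          exact hv i (by simp [h, hi])
      have h1 := hW A _ (ih u huS)
      rw [SWD_tprod, ← Finset.add_sum_erase _ _ (Finset.mem_univ j)] at h1
      have h2 : Function.update u j (A.mulVec (u j)) = v := by
        have : A.mulVec (u j) = v j := by
          rw [hA, Matrix.vecMulVec_mulVec]
          simp [hu]
        rw [this, hu]; simp
      rw [h2] at h1
      refine (Submodule.add_mem_iff_left W ?_).1 h1
      refine Submodule.sum_mem _ fun i hi => ?_
      have hij : i ≠ j := Finset.ne_of_mem_erase hi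
      by_cases hiS : i ∈ S
      · apply ih
        intro l hl
        have : l ≠ i := fun h => hl (h ▸ hiS)
        rw [Function.update_of_ne this]
        exact huS l hl
      · have : A.mulVec (u i) = 0 := by
          rw [huS i hiS, hA, Matrix.vecMulVec_mulVec]
          have : Fin.castLE hKn i ≠ Fin.castLE hKn j := fun h => hij (Fin.castLE_injective _ h)
          simp [this]
        rw [this, MultilinearMap.map_update_zero]
        exact W.zero_mem
  rw [eq_top_iff, ← PiTensorProduct.span_tprod_eq_top, Submodule.span_le]
  rintro _ ⟨v, rfl⟩
  exact key Finset.univ v (by simp)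

/-- The standard basis of the tensor power. -/
noncomputable def SWB (n K : ℕ) : Module.Basis (Fin K → Fin n) ℂ (SWTensor n K) :=
  Basis.piTensorProduct (fun _ => Pi.basisFun ℂ (Fin n))

theorem SWB_apply (n K : ℕ) (g : Fin K → Fin n) :
    SWB n K g = PiTensorProduct.tprod ℂ (fun j => (Pi.single (g j) 1 : Fin n → ℂ)) := by
  simp [SWB]

theorem SWD_diag (n K : ℕ) (m : Fin n) (g : Fin K → Fin n) :
    SWD n K (Matrix.diagonal (Pi.single m 1)) (SWB n K g) =
      ((Finset.univ.filter fun j => g j = m).card : ℂ) • SWB n K g := by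
  rw [SWB_apply, SWD_tprod, Finset.card_filter]
  push_cast
  rw [Finset.sum_smul]
  refine Finset.sum_congr rfl fun j _ => ?_
  have : (Matrix.diagonal (Pi.single m (1:ℂ))).mulVec (Pi.single (g j) 1) =
      (if g j = m then (1:ℂ) else 0) • (Pi.single (g j) 1 : Fin n → ℂ) := by
    ext i
    rw [Matrix.mulVec_diagonal]
    by_cases h1 : i = g j
    · subst h1
      simp [Pi.single_apply]
    · simp [Pi.single_apply, h1]
  rw [this, MultilinearMap.map_update_smul, Function.update_eq_self]

theorem SW_coeff (n K : ℕ) (f : Module.End ℂ (SWTensor n K))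
    (hf : ∀ A : Matrix (Fin n) (Fin n) ℂ, f * SWD n K A = SWD n K A * f)
    (g₀ g : Fin K → Fin n) (hc : (SWB n K).repr (f (SWB n K g₀)) g ≠ 0) (m : Fin n) :
    (Finset.univ.filter fun j => g j = m).card = (Finset.univ.filter fun j => g₀ j = m).card := by
  have h := LinearMap.congr_fun (hf (Matrix.diagonal (Pi.single m 1))) (SWB n K g₀)
  simp only [Module.End.mul_apply, SWD_diag, map_smul] at h
  have h2 : ∀ x, (SWB n K).repr (SWD n K (Matrix.diagonal (Pi.single m 1)) x) g =
      ((Finset.univ.filter fun j => g j = m).card : ℂ) * (SWB n K).repr x g := by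
    intro x
    have : (SWB n K).coord g ∘ₗ SWD n K (Matrix.diagonal (Pi.single m 1)) =
        ((Finset.univ.filter fun j => g j = m).card : ℂ) • (SWB n K).coord g := by
      refine (SWB n K).ext fun g' => ?_
      simp only [LinearMap.comp_apply, SWD_diag, map_smul, LinearMap.smul_apply,
        Module.Basis.coord_apply, Module.Basis.repr_self]
      by_cases hg : g' = g
      · rw [hg]
      · simp [Finsupp.single_apply, hg]
    exact LinearMap.congr_fun this x
  have h3 := congrArg (fun x => (SWB n K).repr x g) h
  simp only [h2, map_smul, Finsupp.smul_apply, smul_eq_mul] at h3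
  exact_mod_cast (mul_right_cancel₀ hc h3).symm

theorem SW_perm (n K : ℕ) (hKn : K ≤ n) (g : Fin K → Fin n)
    (hg : ∀ m, (Finset.univ.filter fun j => g j = m).card =
      (Finset.univ.filter fun j : Fin K => Fin.castLE hKn j = m).card) :
    ∃ σ : Equiv.Perm (Fin K), g = fun j => Fin.castLE hKn (σ⁻¹ j) := by
  have h1 : ∀ j : Fin K, ∃ i, g i = Fin.castLE hKn j := by
    intro j
    have : 0 < (Finset.univ.filter fun i => g i = Fin.castLE hKn j).card := by
      rw [hg]
      exact Finset.card_pos.2 ⟨j, by simp⟩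
    obtain ⟨i, hi⟩ := Finset.card_pos.1 this
    exact ⟨i, by simpa using hi⟩
  choose τ hτ using h1
  have hinj : Function.Injective τ := fun a b h =>
    Fin.castLE_injective hKn (by rw [← hτ a, ← hτ b, h])
  refine ⟨Equiv.ofBijective τ (Finite.injective_iff_bijective.1 hinj), ?_⟩
  funext j
  rw [← hτ]
  congr 1
  exact ((Equiv.ofBijective τ (Finite.injective_iff_bijective.1 hinj)).apply_symm_apply j).symm

/-- If `k ≤ n` then `φ_k : ℂ[Σ_k] → End_ℂ(V^{⊗k})` is injective; combined with the
surjectivity onto the centralizer, `φ_k` is an isomorphism from `ℂ[Σ_k]` onto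
`End_{gl_n}(V^{⊗k})`. -/
theorem schur_weyl_isomorphism (n K : ℕ) (hn : 0 < n) (hK : 0 < K) (hKn : K ≤ n)
    (φ : MonoidAlgebra ℂ (Equiv.Perm (Fin K)) →ₐ[ℂ] Module.End ℂ (SWTensor n K))
    (hφ : ∀ (σ : Equiv.Perm (Fin K)) (v : Fin K → (Fin n → ℂ)),
      φ (MonoidAlgebra.single σ 1) (PiTensorProduct.tprod ℂ v)
        = PiTensorProduct.tprod ℂ (fun j => v (σ⁻¹ j))) :
    Function.Injective ⇑φ ∧
      Set.range ⇑φ = {f : Module.End ℂ (SWTensor n K) |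
        ∀ A : Matrix (Fin n) (Fin n) ℂ, f * SWD n K A = SWD n K A * f} := by
  have hB : ∀ σ : Equiv.Perm (Fin K), φ (MonoidAlgebra.single σ 1) (SWB n K (Fin.castLE hKn)) =
      SWB n K (fun j => Fin.castLE hKn (σ⁻¹ j)) := by
    intro σ
    rw [SWB_apply, hφ, SWB_apply]
  have hinj : Function.Injective
      (fun (σ : Equiv.Perm (Fin K)) (j : Fin K) => Fin.castLE hKn (σ⁻¹ j)) := by
    intro σ τ h
    have : σ⁻¹ = τ⁻¹ := Equiv.ext fun j => Fin.castLE_injective hKn (congrFun h j)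
    exact inv_injective this
  have hcomm : ∀ a A, φ a * SWD n K A = SWD n K A * φ a := by
    intro a A
    induction a using MonoidAlgebra.induction_linear with
    | zero => simp
    | add x y hx hy => rw [map_add, add_mul, mul_add, hx, hy]
    | single σ c =>
      have : MonoidAlgebra.single σ c = c • MonoidAlgebra.single σ (1 : ℂ) := by simp
      rw [this, map_smul, smul_mul_assoc, mul_smul_comm]
      congr 1
      refine PiTensorProduct.ext (MultilinearMap.ext fun v => ?_)
      simp only [LinearMap.compMultilinearMap_apply, Module.End.mul_apply, SWD_tprod, map_sum, hφ]
      refine Fintype.sum_equiv σ _ _ fun j => ?_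
      congr 1
      funext i
      by_cases h : σ⁻¹ i = j
      · have : i = σ j := by rw [← h]; simp
        subst this; simp
      · have h' : i ≠ σ j := fun e => h (by rw [e]; simp)
        rw [Function.update_of_ne h, Function.update_of_ne h']
  constructor
  · have hli := (SWB n K).linearIndependent.comp _ hinj
    rw [injective_iff_map_eq_zero]
    intro a ha
    have h1 : φ a (SWB n K (Fin.castLE hKn)) = 0 := by rw [ha]; rfl
    rw [MonoidAlgebra.lift_unique φ a, Finsupp.sum_fintype _ _ (by simp)] at h1
    simp only [LinearMap.sum_apply, LinearMap.smul_apply, hB] at h1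
    have h2 := Fintype.linearIndependent_iff.1 hli _ h1
    ext σ
    exact h2 σ
  · ext f
    constructor
    · rintro ⟨a, rfl⟩
      exact hcomm a
    · intro hf
      have hspan : f (SWB n K (Fin.castLE hKn)) ∈
          LinearMap.range ((LinearMap.applyₗ (SWB n K (Fin.castLE hKn))) ∘ₗ φ.toLinearMap) := by
        rw [← (SWB n K).sum_repr (f (SWB n K (Fin.castLE hKn)))]
        refine Submodule.sum_mem _ fun g _ => ?_
        by_cases hc : (SWB n K).repr (f (SWB n K (Fin.castLE hKn))) g = 0
        · rw [hc, zero_smul]; exact Submodule.zero_mem _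
        · obtain ⟨σ, hσ⟩ := SW_perm n K hKn g (SW_coeff n K f hf _ g hc)
          refine Submodule.smul_mem _ _ ⟨MonoidAlgebra.single σ 1, ?_⟩
          rw [hσ]
          exact hB σ
      obtain ⟨a, ha⟩ := hspan
      refine ⟨a, ?_⟩
      have htop := SW_cyclic n K hKn (LinearMap.eqLocus (φ a) f) (by
        intro A x hx
        rw [LinearMap.mem_eqLocus] at hx ⊢
        have e1 := LinearMap.congr_fun (hcomm a A) x
        have e2 := LinearMap.congr_fun (hf A) x
        simp only [Module.End.mul_apply] at e1 e2
        rw [e1, e2, hx]) (by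
        rw [LinearMap.mem_eqLocus, ← SWB_apply n K (Fin.castLE hKn)]
        exact ha)
      exact LinearMap.eqLocus_eq_top.1 htop
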